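/- arXiv:2501.11415 — 2 statements merged into one kernel-verified Lean document; each statement's English description precedes it below -/
import Mathlib

section
/- Let p be a prime, let G be a finite group, let S be a Sylow p-subgroup of G, and let Q be a nontrivial normal subgroup of S. Then S·N_G(Q)' ≤ (N_G(S) ∩ N_G(Q))'·O^{p'}(N_G(Q)), and consequently N_G(S) ∩ S·N_G(Q)' ≤ N_G(S)'·(N_G(S) ∩ O^{p'}(N_G(Q))). -/
open Subgroup Pointwise

/-- `O^{p'}(H)`: the subgroup generated by the elements of `H` of `p`-power order. -/
def pResidual {G : Type*} [Group G] (p : ℕ) (H : Subgroup G) : Subgroup G :=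
  Subgroup.closure {g : G | g ∈ H ∧ ∃ n : ℕ, g ^ p ^ n = 1}

/-!
Let `H` be a subgroup containing `S` and `K` a normal subgroup of `H` containing `S`. The Frattini
argument gives `H = (N_G(S) ∩ H) K`, and passing to `H / K` yields `H' ≤ (N_G(S) ∩ H)' K`; as
`S ≤ K`, the right-hand side also contains `S H'`. Both `(N_G(S) ∩ H)'` and `N_G(S)'` lie in
`N_G(S)`, so intersecting with `N_G(S)` and applying Dedekind's law gives the second inclusion.
The theorem is the case `H = N_G(Q)`, `K = O^{p'}(H)`.
-/

section Commutator

variable {G : Type*} [Group G]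

theorem commutator_sup_sup_le_commutator_sup (A B K : Subgroup G) [K.Normal] :
    ⁅A ⊔ K, B ⊔ K⁆ ≤ ⁅A, B⁆ ⊔ K := by
  let π := QuotientGroup.mk' K
  have map_sup_self (C : Subgroup G) : (C ⊔ K).map π = C.map π :=
    (map_eq_map_iff (f := π)).2 (by simp only [π, QuotientGroup.ker_mk', sup_assoc, sup_idem])
  have map_eq : ⁅A ⊔ K, B ⊔ K⁆.map π = ⁅A, B⁆.map π := by
    simp only [map_commutator, map_sup_self]
  calc ⁅A ⊔ K, B ⊔ K⁆ ≤ (⁅A, B⁆.map π).comap π := map_le_iff_le_comap.1 map_eq.le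
    _ = ⁅A, B⁆ ⊔ K := by rw [comap_map_eq, QuotientGroup.ker_mk']

end Commutator

section Frattini

variable {G : Type*} [Group G] {p : ℕ} [Fact p.Prime] (S : Sylow p G)

theorem commutator_le_commutator_normalizer_sup {K : Subgroup G} [K.Normal] [Finite (Sylow p K)]
    (hSK : (S : Subgroup G) ≤ K) :
    commutator G ≤ ⁅normalizer (S : Set G), normalizer (S : Set G)⁆ ⊔ K := by
  rw [commutator_def, ← S.normalizer_sup_eq_top' hSK]
  exact commutator_sup_sup_le_commutator_sup _ _ K

variable {H K : Subgroup G} [Finite (Sylow p H)]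

theorem commutator_le_commutator_normalizer_inf_sup (hSK : (S : Subgroup G) ≤ K) (hKH : K ≤ H)
    (hHK : H ≤ normalizer (K : Set G)) :
    ⁅H, H⁆ ≤ ⁅normalizer (S : Set G) ⊓ H, normalizer (S : Set G) ⊓ H⁆ ⊔ K := by
  have hSH : (S : Subgroup G) ≤ H := hSK.trans hKH
  have : (K.subgroupOf H).Normal := (normal_subgroupOf_iff_le_normalizer hKH).2 hHK
  have map_normalizer : (normalizer (S.subtype hSH : Set H)).map H.subtype =
      normalizer (S : Set G) ⊓ H :=
    (congrArg (map H.subtype) (subgroupOf_normalizer_eq hSH).symm).trans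
      (subgroupOf_map_subtype _ _)
  have map_le_map := map_mono (f := H.subtype) <|
    commutator_le_commutator_normalizer_sup (S.subtype hSH) (K := K.subgroupOf H)
      (subgroupOf_mono H hSK)
  rwa [map_subtype_commutator, Subgroup.map_sup, map_commutator, map_normalizer,
    map_subgroupOf_eq_of_le hKH] at map_le_map

theorem mul_commutator_subset_commutator_normalizer_inf_mul (hSK : (S : Subgroup G) ≤ K)
    (hKH : K ≤ H) (hHK : H ≤ normalizer (K : Set G)) :
    (S : Set G) * (⁅H, H⁆ : Subgroup G) ⊆
      (⁅normalizer (S : Set G) ⊓ H, normalizer (S : Set G) ⊓ H⁆ : Subgroup G) * (K : Set G) := by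
  have commutator_le_normalizer :
      ⁅normalizer (S : Set G) ⊓ H, normalizer (S : Set G) ⊓ H⁆ ≤ normalizer (K : Set G) :=
    (commutator_le_self _).trans (inf_le_right.trans hHK)
  rw [← coe_mul_of_left_le_normalizer_right _ _ commutator_le_normalizer]
  rintro _ ⟨s, hs, c, hc, rfl⟩
  exact mul_mem (mem_sup_right (hSK hs))
    (commutator_le_commutator_normalizer_inf_sup S hSK hKH hHK hc)

end Frattini

section PResidual

variable {G : Type*} [Group G] (p : ℕ) (H : Subgroup G)

theorem pResidual_le : pResidual p H ≤ H :=
  (closure_le H).2 fun _ hg => hg.1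

theorem le_normalizer_pResidual : H ≤ normalizer (pResidual p H : Set G) := by
  refine le_normalizer_closure_iff.2 fun h hh g ⟨hg, n, hgn⟩ => subset_closure ⟨?_, n, ?_⟩
  · exact mul_mem (mul_mem hh hg) (inv_mem hh)
  · rw [conj_pow, hgn, mul_one, mul_inv_cancel]

variable {p H}

theorem le_pResidual_of_isPGroup {P : Subgroup G} (hP : IsPGroup p P) (hPH : P ≤ H) :
    P ≤ pResidual p H := fun x hx =>
  let ⟨n, hn⟩ := hP ⟨x, hx⟩
  subset_closure ⟨hPH hx, n, congrArg Subtype.val hn⟩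

end PResidual

theorem stmt4_general {G : Type*} [Group G] (p : ℕ) [Fact p.Prime] (S : Sylow p G)
    (H : Subgroup G) [Finite (Sylow p H)] (hSH : (S : Subgroup G) ≤ H) :
    (S : Set G) * (⁅H, H⁆ : Subgroup G) ⊆
        (⁅normalizer (S : Set G) ⊓ H, normalizer (S : Set G) ⊓ H⁆ : Subgroup G) *
          (pResidual p H : Set G) ∧
      (normalizer (S : Set G) : Set G) ∩ ((S : Set G) * (⁅H, H⁆ : Subgroup G)) ⊆
        (⁅normalizer (S : Set G), normalizer (S : Set G)⁆ : Subgroup G) *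
          ((normalizer (S : Set G) ⊓ pResidual p H : Subgroup G) : Set G) := by
  set T := normalizer (S : Set G)
  have mul_subset := mul_commutator_subset_commutator_normalizer_inf_mul S
    (le_pResidual_of_isPGroup S.isPGroup' hSH) (pResidual_le p H) (le_normalizer_pResidual p H)
  refine ⟨mul_subset, ?_⟩
  rw [inf_comm T (pResidual p H), mul_inf_assoc _ _ _ (commutator_le_self T), Set.inter_comm]
  have commutator_inf_le : ⁅T ⊓ H, T ⊓ H⁆ ≤ ⁅T, T⁆ := commutator_mono inf_le_left inf_le_left
  exact Set.inter_subset_inter_left _ <|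
    mul_subset.trans (Set.mul_subset_mul_right commutator_inf_le)

theorem stmt4 {G : Type*} [Group G] [Fintype G] (p : ℕ) [Fact p.Prime]
    (S : Sylow p G) (Q : Subgroup G) (hQ : Q ≠ ⊥) (hQS : Q ≤ (S : Subgroup G))
    (hQnorm : ∀ s ∈ (S : Subgroup G), ∀ q ∈ Q, s * q * s⁻¹ ∈ Q) :
    (((S : Subgroup G) : Set G) *
        ((⁅Subgroup.normalizer (Q : Set G), Subgroup.normalizer (Q : Set G)⁆ : Subgroup G) : Set G)) ⊆
      (((⁅Subgroup.normalizer ((S : Subgroup G) : Set G) ⊓ Subgroup.normalizer (Q : Set G),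
            Subgroup.normalizer ((S : Subgroup G) : Set G) ⊓ Subgroup.normalizer (Q : Set G)⁆ : Subgroup G) : Set G) *
        (pResidual p (Subgroup.normalizer (Q : Set G)) : Set G)) ∧
      ((Subgroup.normalizer ((S : Subgroup G) : Set G) : Set G) ∩
          (((S : Subgroup G) : Set G) *
            ((⁅Subgroup.normalizer (Q : Set G), Subgroup.normalizer (Q : Set G)⁆ : Subgroup G) : Set G))) ⊆
        (((⁅Subgroup.normalizer ((S : Subgroup G) : Set G), Subgroup.normalizer ((S : Subgroup G) : Set G)⁆ : Subgroup G) : Set G) *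
          ((Subgroup.normalizer ((S : Subgroup G) : Set G) ⊓ pResidual p (Subgroup.normalizer (Q : Set G)) : Subgroup G) : Set G)) := by
  exact stmt4_general p S _ (le_normalizer_iff.2 hQnorm)
end

section
/- Let p be a prime, let G be a finite group, and let S be a Sylow p-subgroup of G. Then for every nontrivial subgroup Q of S one has ρ^1(Q) ≤ ρ^1(Ω1(Q)), and for every i ≥ 1 and every nontrivial subgroup Q of S, ρ^{i+1}(Q) = ⟨N_G(Q) ∩ ρ^i(P) : 1 < P ≤ Ω1(S)⟩; that is, in the inductive definition of ρ^{i+1}(Q) it suffices to let P range over the nontrivial subgroups of Ω1(S). -/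
open Subgroup

/-- `Ω₁(S)`: the subgroup generated by the elements of `S` of order dividing `p`. -/
def omega1 {G : Type*} [Group G] (p : ℕ) (S : Subgroup G) : Subgroup G :=
  Subgroup.closure {g : G | g ∈ S ∧ g ^ p = 1}

/-- `T` is a Sylow `p`-subgroup of the subgroup `H` of `G`: a `p`-subgroup of `H`
that is maximal among the `p`-subgroups of `H`. -/
def IsSylowPSubgroupOf {G : Type*} [Group G] (p : ℕ) (T H : Subgroup G) : Prop :=
  T ≤ H ∧ IsPGroup p T ∧ ∀ U : Subgroup G, U ≤ H → IsPGroup p U → T ≤ U → U = T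

/-- The Carlson–Thévenaz subgroups `ρ^i(P)`, relative to a choice `SP P` of a Sylow
`p`-subgroup of `N_G(P)` for each `P`: `ρ^1(P) = S_P·N_G(P)'` and
`ρ^{i+1}(P) = ⟨N_G(P) ∩ ρ^i(Q) : 1 < Q ≤ S⟩`. -/
def rho {G : Type*} [Group G] (SP : Subgroup G → Subgroup G) (S : Subgroup G) :
    ℕ → Subgroup G → Subgroup G
  | 0, _ => ⊥
  | 1, P => SP P ⊔ ⁅Subgroup.normalizer (P : Set G), Subgroup.normalizer (P : Set G)⁆
  | (i + 2), P =>
      ⨆ Q ∈ {Q : Subgroup G | Q ≠ ⊥ ∧ Q ≤ S}, Subgroup.normalizer (P : Set G) ⊓ rho SP S (i + 1) Q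

/-! The subgroup `Ω₁(Q)` is characteristic in `Q`, so `N_G(Q) ≤ N_G(Ω₁(Q))`, and it is nontrivial
when `Q` is a nontrivial `p`-group. Each `ρ^i(Q)` can only grow when `N_G(Q)` does: for `i = 1`,
the Sylow `p`-subgroup of the smaller normalizer is conjugate in the larger one into the chosen
Sylow `p`-subgroup, hence contained in it modulo the derived subgroup. Therefore
`ρ^i(P) ≤ ρ^i(Ω₁(P))`, and the term of `P` in the supremum defining `ρ^{i+1}(Q)` is absorbed by
that of `Ω₁(P) ≤ Ω₁(S)`. -/

section

variable {G : Type*} [Group G] {p : ℕ}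

theorem omega1_le (p : ℕ) (S : Subgroup G) : omega1 p S ≤ S :=
  (closure_le S).mpr fun _ hg => hg.1

theorem omega1_mono (p : ℕ) : Monotone (omega1 (G := G) p) :=
  fun _ _ h => closure_mono fun _ hg => ⟨h hg.1, hg.2⟩

theorem omega1_eq_bot_iff {Q : Subgroup G} (hQ : IsPGroup p Q) : omega1 p Q = ⊥ ↔ Q = ⊥ := by
  refine ⟨fun h => (eq_bot_iff_forall Q).mpr fun g hg => ?_,
    fun h => le_bot_iff.mp (h ▸ omega1_le p Q)⟩
  have eq_one_of_pow_eq_one {x : G} (hx : x ∈ Q) (hxp : x ^ p = 1) : x = 1 :=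
    mem_bot.mp (h ▸ subset_closure ⟨hx, hxp⟩)
  obtain ⟨k, hk⟩ : ∃ k, g ^ p ^ k = 1 := by
    obtain ⟨k, hk⟩ := isPGroup_iff_pow_pow_eq_one.mp hQ ⟨g, hg⟩
    exact ⟨k, congrArg Subtype.val hk⟩
  induction k with
  | zero => simpa only [pow_zero, pow_one] using hk
  | succ k ih => exact ih (eq_one_of_pow_eq_one (pow_mem hg _) (by rwa [← pow_mul, ← pow_succ]))

theorem normalizer_le_normalizer_omega1 (p : ℕ) (Q : Subgroup G) :
    normalizer (Q : Set G) ≤ normalizer (omega1 p Q : Set G) := by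
  have h : normalizer (Q : Set G) ≤ normalizer {g : G | g ∈ Q ∧ g ^ p = 1} := fun g hg x => by
    simp only [Set.mem_ofPred_eq, mem_normalizer_iff.mp hg x, conj_pow, conj_eq_one_iff]
  exact h.trans (normalizer_le_normalizer_closure _)

theorem le_sylow_sup_commutator [Fact p.Prime] [Finite (Sylow p G)] (P : Sylow p G)
    {U : Subgroup G} (hU : IsPGroup p U) : U ≤ (P : Subgroup G) ⊔ _root_.commutator G := by
  have hnormal : ((P : Subgroup G) ⊔ _root_.commutator G).Normal :=
    Normal.of_commutator_le _ le_sup_right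
  obtain ⟨R, hUR⟩ := hU.exists_le_sylow
  obtain ⟨g, rfl⟩ := MulAction.exists_smul_eq G P R
  refine hUR.trans ?_
  rintro _ ⟨x, hx, rfl⟩
  exact hnormal.conj_mem x (mem_sup_left hx) g

namespace IsSylowPSubgroupOf

/-- A Sylow `p`-subgroup `T` of `H`, given as a subgroup of the ambient group `G`, as an element
of Mathlib's type of Sylow `p`-subgroups of `H`. -/
def toSylow {T H : Subgroup G} (hT : IsSylowPSubgroupOf p T H) : Sylow p H where
  toSubgroup := T.subgroupOf H
  isPGroup' := hT.2.1.comap_subtype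
  is_maximal' {V} hV hTV := by
    have hmap : V.map H.subtype = T :=
      hT.2.2 _ (map_subtype_le V) (hV.map _)
        (map_subgroupOf_eq_of_le hT.1 ▸ map_mono hTV)
    rw [← hmap, subgroupOf, comap_map_eq_self_of_injective H.subtype_injective]

theorem le_sup_commutator [Fact p.Prime] {T H U : Subgroup G} [Finite (Sylow p H)]
    (hT : IsSylowPSubgroupOf p T H) (hUH : U ≤ H) (hU : IsPGroup p U) : U ≤ T ⊔ ⁅H, H⁆ :=
  calc
    U = (U.subgroupOf H).map H.subtype := (map_subgroupOf_eq_of_le hUH).symm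
    _ ≤ (T.subgroupOf H ⊔ _root_.commutator H).map H.subtype :=
      map_mono (le_sylow_sup_commutator hT.toSylow hU.comap_subtype)
    _ = T ⊔ ⁅H, H⁆ := by rw [Subgroup.map_sup, map_subgroupOf_eq_of_le hT.1, map_subtype_commutator]

end IsSylowPSubgroupOf

variable [Fact p.Prime] [Finite (Sylow p G)] {SP : Subgroup G → Subgroup G}

theorem rho_le_rho_of_normalizer_le
    (hSP : ∀ P : Subgroup G, IsSylowPSubgroupOf p (SP P) (normalizer (P : Set G)))
    (S : Subgroup G) {P Q : Subgroup G} (h : normalizer (P : Set G) ≤ normalizer (Q : Set G)) :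
    ∀ i : ℕ, rho SP S i P ≤ rho SP S i Q
  | 0 => le_rfl
  | 1 => sup_le ((hSP Q).le_sup_commutator ((hSP P).1.trans h) (hSP P).2.1)
      ((commutator_mono h h).trans le_sup_right)
  | _ + 2 => iSup₂_mono fun _ _ => inf_le_inf_right _ h

theorem rho_le_rho_omega1
    (hSP : ∀ P : Subgroup G, IsSylowPSubgroupOf p (SP P) (normalizer (P : Set G)))
    (S : Subgroup G) (i : ℕ) (Q : Subgroup G) : rho SP S i Q ≤ rho SP S i (omega1 p Q) :=
  rho_le_rho_of_normalizer_le hSP S (normalizer_le_normalizer_omega1 p Q) i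

theorem rho_succ_eq_iSup_le_omega1
    (hSP : ∀ P : Subgroup G, IsSylowPSubgroupOf p (SP P) (normalizer (P : Set G)))
    {S : Subgroup G} (hS : IsPGroup p S) {i : ℕ} (hi : 1 ≤ i) (Q : Subgroup G) :
    rho SP S (i + 1) Q =
      ⨆ P ∈ {P : Subgroup G | P ≠ ⊥ ∧ P ≤ omega1 p S},
        normalizer (Q : Set G) ⊓ rho SP S i P := by
  obtain ⟨j, rfl⟩ := Nat.exists_eq_add_of_le' hi
  apply le_antisymm
  · refine iSup₂_le fun P ⟨hP, hPS⟩ => ?_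
    have hΩP : omega1 p P ≠ ⊥ := (omega1_eq_bot_iff (hS.to_le hPS)).not.mpr hP
    exact le_iSup₂_of_le (omega1 p P) ⟨hΩP, omega1_mono p hPS⟩
      (inf_le_inf_left _ (rho_le_rho_omega1 hSP S (j + 1) P))
  · exact biSup_mono fun P ⟨hP, hPS⟩ => ⟨hP, hPS.trans (omega1_le p S)⟩

end

theorem stmt5_general {G : Type*} [Group G] (p : ℕ) [Fact p.Prime] [Finite (Sylow p G)]
    {S : Subgroup G} (hS : IsPGroup p S) (SP : Subgroup G → Subgroup G)
    (hSP : ∀ P : Subgroup G, IsSylowPSubgroupOf p (SP P) (normalizer (P : Set G))) :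
    (∀ (i : ℕ) (Q : Subgroup G), rho SP S i Q ≤ rho SP S i (omega1 p Q)) ∧
    (∀ i : ℕ, 1 ≤ i → ∀ Q : Subgroup G,
      rho SP S (i + 1) Q =
        ⨆ P ∈ {P : Subgroup G | P ≠ ⊥ ∧ P ≤ omega1 p S},
          normalizer (Q : Set G) ⊓ rho SP S i P) :=
  ⟨rho_le_rho_omega1 hSP S, fun _ hi => rho_succ_eq_iSup_le_omega1 hSP hS hi⟩

theorem stmt5 {G : Type*} [Group G] [Fintype G] (p : ℕ) [Fact p.Prime]
    (S : Sylow p G) (SP : Subgroup G → Subgroup G)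
    (hSP : ∀ P : Subgroup G, IsSylowPSubgroupOf p (SP P) (Subgroup.normalizer (P : Set G))) :
    (∀ Q : Subgroup G, Q ≠ ⊥ → Q ≤ (S : Subgroup G) →
      rho SP (S : Subgroup G) 1 Q ≤ rho SP (S : Subgroup G) 1 (omega1 p Q)) ∧
    (∀ i : ℕ, 1 ≤ i → ∀ Q : Subgroup G, Q ≠ ⊥ → Q ≤ (S : Subgroup G) →
      rho SP (S : Subgroup G) (i + 1) Q =
        ⨆ P ∈ {P : Subgroup G | P ≠ ⊥ ∧ P ≤ omega1 p (S : Subgroup G)},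
          Subgroup.normalizer (Q : Set G) ⊓ rho SP (S : Subgroup G) i P) :=
  have ⟨hle, heq⟩ := stmt5_general p S.isPGroup' SP hSP
  ⟨fun Q _ _ => hle 1 Q, fun i hi Q _ _ => heq i hi Q⟩
end
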